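/- arXiv:math-ph/0402014 — 3 statements merged into one kernel-verified Lean document; each statement's English description precedes it below -/
import Mathlib

section
/- Let K ≥ 2 be an integer and A,B integers with (A,B) not both ≡ 0 mod K, and let μ ∈ ℂ with Im μ > 0. For every γ ∈ ℂ such that θ_{[00]}(γ;μ) ≠ 0, θ_{[AB]}(0;μ) ≠ 0 and θ_{[−A,−B]}(0;μ) ≠ 0, the following identity holds: w_{AB}(γ;μ)·w_{−A,−B}(γ;μ) = (∂²_γθ_{[AB]})(0;μ)/θ_{[AB]}(0;μ) − ((∂_γθ_{[AB]})(0;μ)/θ_{[AB]}(0;μ))² − ρ'(γ;μ), where ρ'(γ;μ) = ∂_γρ(γ;μ). (The constant on the right-hand side equals 2πi·Z_{AB}(0;μ), the value at 0 of the holomorphic extension of Z_{AB}.) -/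
open Complex Filter

/-- Theta function with characteristics `p, q`. -/
noncomputable def Theta (p q : ℝ) (γ μ : ℂ) : ℂ :=
  ∑' m : ℤ, Complex.exp ((Real.pi : ℂ) * Complex.I * μ * ((m : ℂ) + (p : ℂ))^2
    + 2 * (Real.pi : ℂ) * Complex.I * ((m : ℂ) + (p : ℂ)) * (γ + (q : ℂ)))

/-- The Jacobi theta function `θ₁`. -/
noncomputable def theta1 (γ μ : ℂ) : ℂ := -Theta (1/2) (1/2) γ μ

/-- Logarithmic derivative of `θ₁` in the first argument. -/
noncomputable def rho (γ μ : ℂ) : ℂ := deriv (fun z => theta1 z μ) γ / theta1 γ μ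

/-- `θ_{[AB]}`, theta with characteristics `A/K - 1/2`, `1/2 - B/K`. -/
noncomputable def thetaAB (K : ℕ) (A B : ℤ) (γ μ : ℂ) : ℂ :=
  Theta ((A : ℝ)/(K : ℝ) - 1/2) (1/2 - (B : ℝ)/(K : ℝ)) γ μ

/-- The coefficients `w_{AB}` of the elliptic r-matrix. -/
noncomputable def wAB (K : ℕ) (A B : ℤ) (γ μ : ℂ) : ℂ :=
  thetaAB K A B γ μ * deriv (fun z => thetaAB K 0 0 z μ) 0
    / (thetaAB K A B 0 μ * thetaAB K 0 0 γ μ)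

/-- The functions `Z_{AB}`. -/
noncomputable def ZAB (K : ℕ) (A B : ℤ) (γ μ : ℂ) : ℂ :=
  wAB K A B γ μ / (2 * (Real.pi : ℂ) * Complex.I) *
    (deriv (fun z => thetaAB K A B z μ) γ / thetaAB K A B γ μ
      - deriv (fun z => thetaAB K A B z μ) 0 / thetaAB K A B 0 μ)

/-- `ε = exp(2πi/K)`. -/
noncomputable def epsK (K : ℕ) : ℂ := Complex.exp (2 * (Real.pi : ℂ) * Complex.I / (K : ℂ))

/-- The diagonal matrix `F = diag(1, ε, …, ε^{K-1})`. -/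
noncomputable def Fmat (K : ℕ) : Matrix (Fin K) (Fin K) ℂ :=
  Matrix.diagonal (fun i => epsK K ^ (i : ℕ))

/-- The cyclic permutation matrix `H`. -/
def Hmat (K : ℕ) : Matrix (Fin K) (Fin K) ℂ :=
  Matrix.of fun i j => if (j : ℕ) = ((i : ℕ) + 1) % K then 1 else 0

/-- `σ_{AB} = H^A F^B` (indices taken mod `K`, using `H^K = F^K = 1`). -/
noncomputable def sigmaAB (K : ℕ) (A B : ℤ) : Matrix (Fin K) (Fin K) ℂ :=
  Hmat K ^ ((A % (K : ℤ)).toNat) * Fmat K ^ ((B % (K : ℤ)).toNat)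

/-- The dual basis `σ^{AB} = (ε^{-AB}/K)·σ_{-A,-B}`. -/
noncomputable def sigmaDualAB (K : ℕ) (A B : ℤ) : Matrix (Fin K) (Fin K) ℂ :=
  (epsK K ^ (-(A * B)) / (K : ℂ)) • sigmaAB K (-A) (-B)

open Kronecker in
/-- The elliptic r-matrix. -/
noncomputable def rmat (K : ℕ) (γ μ : ℂ) : Matrix (Fin K × Fin K) (Fin K × Fin K) ℂ :=
  ∑ A ∈ Finset.range K, ∑ B ∈ Finset.range K,
    if A = 0 ∧ B = 0 then 0
    else wAB K A B γ μ • (sigmaAB K A B ⊗ₖ sigmaDualAB K A B)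

/-!
Up to an exponential factor, `w_{AB}(γ)` is the Kronecker function
`F(u, γ) = θ₁(u + γ) θ₁'(0) / (θ₁(u) θ₁(γ))` at `u = (A/K) μ - B/K`. In the product with
`w_{-A,-B}` the exponentials cancel, and the claim becomes
`F(u, γ) F(-u, γ) = (log θ₁)''(u) - (log θ₁)''(γ)`, the theta form of `℘(γ) - ℘(u)`.
To prove it without elliptic function theory, multiply the two series for `θ₁(z + u) θ₁(z - u)` and
sort by the parity of the summation indices: the product is an alternating form
`a(z) b(u) - b(z) a(u)` in two functions. Setting `u = 0`, respectively differentiating twice at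
`u = 0`, puts `θ₁²` and `θ₁² (log θ₁)''` into the span of `a` and `b`, and the identity is linear
algebra in that plane.
-/

section LogDeriv

variable {𝕜 : Type*} [NontriviallyNormedField 𝕜] {f a b : 𝕜 → 𝕜}

lemma deriv_logDeriv {𝕜' : Type*} [NontriviallyNormedField 𝕜'] [NormedAlgebra 𝕜 𝕜'] {g : 𝕜 → 𝕜'}
    {z : 𝕜} (hg : DifferentiableAt 𝕜 g z) (hg' : DifferentiableAt 𝕜 (deriv g) z) (hz : g z ≠ 0) :
    deriv (logDeriv g) z = deriv (deriv g) z / g z - (deriv g z / g z) ^ 2 := by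
  rw [logDeriv, deriv_div hg' hg hz]
  field_simp

lemma deriv_deriv_mul_reflect (hf : Differentiable 𝕜 f) (hf' : Differentiable 𝕜 (deriv f))
    (z : 𝕜) :
    deriv (deriv fun u => f (z + u) * f (z - u)) 0 =
      2 * (deriv (deriv f) z * f z - deriv f z ^ 2) := by
  have hadd {g : 𝕜 → 𝕜} (hg : Differentiable 𝕜 g) (u : 𝕜) :
      HasDerivAt (fun u => g (z + u)) (deriv g (z + u)) u :=
    (hg (z + u)).hasDerivAt.comp_const_add z u
  have hsub {g : 𝕜 → 𝕜} (hg : Differentiable 𝕜 g) (u : 𝕜) :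
      HasDerivAt (fun u => g (z - u)) (-deriv g (z - u)) u :=
    (hg (z - u)).hasDerivAt.comp_const_sub z u
  have hderiv : (deriv fun u => f (z + u) * f (z - u)) =
      fun u => deriv f (z + u) * f (z - u) + f (z + u) * -deriv f (z - u) :=
    funext fun u => ((hadd hf u).fun_mul (hsub hf u)).deriv
  rw [hderiv, (((hadd hf' 0).fun_mul (hsub hf 0)).fun_add
    ((hadd hf 0).fun_mul (hsub hf' 0).fun_neg)).deriv, add_zero, sub_zero]
  ring

lemma deriv_deriv_alternating (ha : Differentiable 𝕜 a) (ha' : Differentiable 𝕜 (deriv a))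
    (hb : Differentiable 𝕜 b) (hb' : Differentiable 𝕜 (deriv b)) (z u : 𝕜) :
    deriv (deriv fun u => a z * b u - b z * a u) u =
      a z * deriv (deriv b) u - b z * deriv (deriv a) u := by
  have hderiv {g h : 𝕜 → 𝕜} (hg : Differentiable 𝕜 g) (hh : Differentiable 𝕜 h) :
      (deriv fun u => a z * h u - b z * g u) = fun u => a z * deriv h u - b z * deriv g u :=
    funext fun u => (((hh u).hasDerivAt.const_mul (a z)).fun_sub
      ((hg u).hasDerivAt.const_mul (b z))).deriv
  rw [hderiv ha hb, hderiv ha' hb']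

theorem mul_reflect_mul_deriv_sq_of_alternating [NeZero (2 : 𝕜)] (hf : ContDiff 𝕜 2 f)
    (ha : ContDiff 𝕜 2 a) (hb : ContDiff 𝕜 2 b)
    (h : ∀ z u, f (z + u) * f (z - u) = a z * b u - b z * a u) (z u : 𝕜) :
    f (z + u) * f (z - u) * deriv f 0 ^ 2 =
      f u ^ 2 * (deriv (deriv f) z * f z - deriv f z ^ 2) -
        f z ^ 2 * (deriv (deriv f) u * f u - deriv f u ^ 2) := by
  have hsq (w : 𝕜) : f w ^ 2 = a w * b 0 - b w * a 0 := by
    simpa only [add_zero, sub_zero, sq] using h w 0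
  have hf0 : f 0 = 0 := pow_eq_zero_iff two_ne_zero |>.1 ((hsq 0).trans (by ring))
  have hcross (w : 𝕜) : 2 * (deriv (deriv f) w * f w - deriv f w ^ 2) =
      a w * deriv (deriv b) 0 - b w * deriv (deriv a) 0 := by
    rw [← deriv_deriv_mul_reflect (hf.differentiable two_ne_zero) hf.differentiable_deriv_two,
      ← deriv_deriv_alternating (ha.differentiable two_ne_zero) ha.differentiable_deriv_two
        (hb.differentiable two_ne_zero) hb.differentiable_deriv_two, funext (h w)]
  have hcross0 := hcross 0
  rw [hf0] at hcross0
  refine mul_left_cancel₀ (two_ne_zero : (2 : 𝕜) ≠ 0) ?_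
  rw [h z u, hsq z, hsq u]
  -- The Plücker relation for the plane spanned by `a` and `b`.
  linear_combination (-(a z * b u - b z * a u)) * hcross0
    - (a u * b 0 - b u * a 0) * hcross z + (a z * b 0 - b z * a 0) * hcross u

theorem mul_reflect_div_eq_deriv_logDeriv_sub [NeZero (2 : 𝕜)] (hf : ContDiff 𝕜 2 f)
    (ha : ContDiff 𝕜 2 a) (hb : ContDiff 𝕜 2 b)
    (h : ∀ z u, f (z + u) * f (z - u) = a z * b u - b z * a u) {z u : 𝕜}
    (hz : f z ≠ 0) (hu : f u ≠ 0) :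
    f (z + u) * f (z - u) * deriv f 0 ^ 2 / (f z ^ 2 * f u ^ 2) =
      deriv (logDeriv f) z - deriv (logDeriv f) u := by
  have hf₁ := hf.differentiable two_ne_zero
  rw [mul_reflect_mul_deriv_sq_of_alternating hf ha hb h,
    deriv_logDeriv (hf₁ z) (hf.differentiable_deriv_two z) hz,
    deriv_logDeriv (hf₁ u) (hf.differentiable_deriv_two u) hu]
  field_simp

end LogDeriv

lemma deriv_logDeriv_const_mul_exp_mul_comp_add {f : ℂ → ℂ} (hf : Differentiable ℂ f)
    {c : ℂ} (hc : c ≠ 0) (k u : ℂ) {x : ℂ} (hx : f (x + u) ≠ 0) :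
    deriv (logDeriv fun z => c * exp (k * z) * f (z + u)) x = deriv (logDeriv f) (x + u) := by
  have hexp (z : ℂ) : HasDerivAt (fun z => c * exp (k * z)) (c * (exp (k * z) * (k * 1))) z :=
    ((hasDerivAt_id z).const_mul k).cexp.const_mul c
  have hlog : (logDeriv fun z => c * exp (k * z) * f (z + u)) =ᶠ[nhds x]
      fun z => k + logDeriv f (z + u) := by
    have hne : ∀ᶠ z in nhds x, f (z + u) ≠ 0 :=
      (hf.continuous.comp (continuous_add_const u)).continuousAt.eventually_ne hx
    filter_upwards [hne] with z hz
    have hexp_ne := exp_ne_zero (k * z)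
    rw [logDeriv_apply, ((hexp z).fun_mul ((hf (z + u)).hasDerivAt.comp_add_const z u)).deriv,
      logDeriv_apply]
    field_simp
  rw [hlog.deriv_eq, deriv_const_add, deriv_comp_add_const]

/-- The term of index `m` in the series defining `Theta p q γ μ`. -/
noncomputable def thetaTerm (p q : ℝ) (γ μ : ℂ) (m : ℤ) : ℂ :=
  exp (Real.pi * I * μ * (m + p) ^ 2 + 2 * Real.pi * I * (m + p) * (γ + q))

lemma theta_eq_tsum (p q : ℝ) (γ μ : ℂ) : Theta p q γ μ = ∑' m, thetaTerm p q γ μ m := rfl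

lemma thetaTerm_zero_zero (γ μ : ℂ) : thetaTerm 0 0 γ μ = fun m => jacobiTheta₂_term m γ μ := by
  ext m
  rw [thetaTerm, jacobiTheta₂_term]
  push_cast
  ring_nf

lemma thetaTerm_add_add (p q a b : ℝ) (γ μ : ℂ) (m : ℤ) :
    thetaTerm (p + a) (q + b) γ μ m =
      exp (Real.pi * I * μ * a ^ 2 + 2 * Real.pi * I * a * (γ + q + b)) *
        thetaTerm p q (γ + (a * μ + b)) μ m := by
  rw [thetaTerm, thetaTerm, ← exp_add]
  push_cast
  ring_nf

lemma theta_add_add (p q a b : ℝ) (γ μ : ℂ) :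
    Theta (p + a) (q + b) γ μ =
      exp (Real.pi * I * μ * a ^ 2 + 2 * Real.pi * I * a * (γ + q + b)) *
        Theta p q (γ + (a * μ + b)) μ := by
  simp only [theta_eq_tsum, thetaTerm_add_add, tsum_mul_left]

lemma theta_add_one_left (p q : ℝ) (γ μ : ℂ) : Theta (p + 1) q γ μ = Theta p q γ μ := by
  rw [theta_eq_tsum, theta_eq_tsum, ← (Equiv.addRight (1 : ℤ)).tsum_eq (thetaTerm p q γ μ)]
  refine tsum_congr fun m => ?_
  rw [thetaTerm, thetaTerm, Equiv.coe_addRight]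
  push_cast
  ring_nf

lemma theta_add_one_right (p q : ℝ) (γ μ : ℂ) :
    Theta p (q + 1) γ μ = exp (2 * Real.pi * I * p) * Theta p q γ μ := by
  rw [theta_eq_tsum, theta_eq_tsum, ← tsum_mul_left]
  refine tsum_congr fun m => ?_
  calc thetaTerm p (q + 1) γ μ m
      = exp (2 * Real.pi * I * p) * thetaTerm p q γ μ m * exp (m * (2 * Real.pi * I)) := by
        rw [thetaTerm, thetaTerm, ← exp_add, ← exp_add]
        push_cast
        ring_nf
    _ = exp (2 * Real.pi * I * p) * thetaTerm p q γ μ m := by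
        rw [exp_int_mul_two_pi_mul_I, mul_one]

lemma theta_neg (p q : ℝ) (γ μ : ℂ) : Theta p q (-γ) μ = Theta (-p) (-q) γ μ := by
  rw [theta_eq_tsum, theta_eq_tsum, ← (Equiv.neg ℤ).tsum_eq (thetaTerm (-p) (-q) γ μ)]
  refine tsum_congr fun m => ?_
  rw [thetaTerm, thetaTerm, Equiv.neg_apply]
  push_cast
  ring_nf

lemma hasSum_thetaTerm (p q : ℝ) (γ : ℂ) {μ : ℂ} (hμ : 0 < μ.im) :
    HasSum (thetaTerm p q γ μ) (Theta p q γ μ) := by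
  have hsum (w : ℂ) : Summable (thetaTerm 0 0 w μ) := by
    rw [thetaTerm_zero_zero]
    exact (summable_jacobiTheta₂_term_iff w μ).2 hμ
  refine Summable.hasSum ?_
  rw [← zero_add p, ← zero_add q, funext (thetaTerm_add_add 0 0 p q γ μ)]
  exact (hsum _).mul_left _

lemma differentiable_theta (p q : ℝ) {μ : ℂ} (hμ : 0 < μ.im) :
    Differentiable ℂ fun γ => Theta p q γ μ := by
  have h00 : Differentiable ℂ fun γ => Theta 0 0 γ μ := by
    simp only [theta_eq_tsum, thetaTerm_zero_zero]
    exact fun γ => differentiableAt_jacobiTheta₂_fst γ hμ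
  rw [← zero_add p, ← zero_add q, funext fun γ => theta_add_add 0 0 p q γ μ]
  exact Differentiable.mul (by fun_prop) (h00.comp (by fun_prop))

/-- The splitting of `ℤ × ℤ` into the pairs of even and of odd coordinate sum, each parametrized
by half the sum and half the difference of the coordinates (minus `1 / 2` in the odd case); it
reindexes products of two theta series. -/
noncomputable def parityEquiv : (ℤ × ℤ) ⊕ (ℤ × ℤ) ≃ ℤ × ℤ :=
  Equiv.ofBijective
    (Sum.elim (fun x => (x.1 + x.2, x.1 - x.2)) fun x => (x.1 + x.2 + 1, x.1 - x.2)) <| by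
    constructor
    · rintro (⟨i, j⟩ | ⟨i, j⟩) (⟨k, l⟩ | ⟨k, l⟩) h <;>
        simp only [Sum.elim_inl, Sum.elim_inr, Prod.mk.injEq, Sum.inl.injEq, Sum.inr.injEq,
          reduceCtorEq] at h ⊢ <;> omega
    · rintro ⟨m, n⟩
      obtain ⟨k, hk | hk⟩ := Int.even_or_odd' (m + n)
      · exact ⟨Sum.inl (k, m - k), by simp only [Sum.elim_inl, Prod.mk.injEq]; omega⟩
      · exact ⟨Sum.inr (k, m - k - 1), by simp only [Sum.elim_inr, Prod.mk.injEq]; omega⟩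

lemma parityEquiv_inl (x : ℤ × ℤ) : parityEquiv (Sum.inl x) = (x.1 + x.2, x.1 - x.2) := rfl

lemma parityEquiv_inr (x : ℤ × ℤ) : parityEquiv (Sum.inr x) = (x.1 + x.2 + 1, x.1 - x.2) := rfl

lemma hasSum_thetaTerm_mul (p q p' q' : ℝ) (γ γ' : ℂ) {μ μ' : ℂ} (hμ : 0 < μ.im)
    (hμ' : 0 < μ'.im) :
    HasSum (fun x : ℤ × ℤ => thetaTerm p q γ μ x.1 * thetaTerm p' q' γ' μ' x.2)
      (Theta p q γ μ * Theta p' q' γ' μ') :=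
  have h := hasSum_thetaTerm p q γ hμ
  have h' := hasSum_thetaTerm p' q' γ' hμ'
  h.mul h' (summable_mul_of_summable_norm h.summable.norm h'.summable.norm)

theorem theta_add_mul_theta_sub (p q p' q' : ℝ) (z u : ℂ) {μ : ℂ} (hμ : 0 < μ.im) :
    Theta p q (z + u) μ * Theta p' q' (z - u) μ =
      Theta ((p + p') / 2) (q + q') (2 * z) (2 * μ) *
          Theta ((p - p') / 2) (q - q') (2 * u) (2 * μ) +
        Theta ((p + p' + 1) / 2) (q + q') (2 * z) (2 * μ) *
          Theta ((p - p' + 1) / 2) (q - q') (2 * u) (2 * μ) := by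
  have hμ₂ : 0 < (2 * μ).im := by simpa using hμ
  refine ((parityEquiv.hasSum_iff).2
    (hasSum_thetaTerm_mul p q p' q' (z + u) (z - u) hμ hμ)).unique (HasSum.sum ?_ ?_)
  · convert hasSum_thetaTerm_mul ((p + p') / 2) (q + q') ((p - p') / 2) (q - q') (2 * z) (2 * u)
      hμ₂ hμ₂ using 2 with x
    simp only [Function.comp_apply, parityEquiv_inl, thetaTerm, ← exp_add]
    push_cast
    ring_nf
  · convert hasSum_thetaTerm_mul ((p + p' + 1) / 2) (q + q') ((p - p' + 1) / 2) (q - q')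
      (2 * z) (2 * u) hμ₂ hμ₂ using 2 with x
    simp only [Function.comp_apply, parityEquiv_inr, thetaTerm, ← exp_add]
    push_cast
    ring_nf

lemma differentiable_theta1 {μ : ℂ} (hμ : 0 < μ.im) : Differentiable ℂ fun γ => theta1 γ μ :=
  (differentiable_theta (1 / 2) (1 / 2) hμ).neg

lemma theta1_neg (γ μ : ℂ) : theta1 (-γ) μ = -theta1 γ μ := by
  have h : Theta (1 / 2) (1 / 2) γ μ = -Theta (-(1 / 2)) (-(1 / 2)) γ μ := by
    have hexp : exp (2 * Real.pi * I * (-(1 / 2) : ℝ)) = -1 := by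
      rw [← exp_neg_pi_mul_I]
      push_cast
      ring_nf
    rw [show (1 / 2 : ℝ) = -(1 / 2) + 1 by norm_num, theta_add_one_left, theta_add_one_right,
      hexp, neg_one_mul]
    norm_num
  rw [theta1, theta1, theta_neg, h, neg_neg]

theorem theta1_add_mul_theta1_sub (z u : ℂ) {μ : ℂ} (hμ : 0 < μ.im) :
    theta1 (z + u) μ * theta1 (z - u) μ =
      Theta 0 0 (2 * z) (2 * μ) * Theta (1 / 2) 0 (2 * u) (2 * μ) -
        Theta (1 / 2) 0 (2 * z) (2 * μ) * Theta 0 0 (2 * u) (2 * μ) := by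
  have hhalf : Theta (1 / 2) 1 (2 * z) (2 * μ) = -Theta (1 / 2) 0 (2 * z) (2 * μ) := by
    have hexp : exp (2 * Real.pi * I * (1 / 2 : ℝ)) = -1 := by
      rw [← exp_pi_mul_I]
      push_cast
      ring_nf
    rw [← zero_add (1 : ℝ), theta_add_one_right, zero_add, hexp, neg_one_mul]
  have hone : Theta 1 1 (2 * z) (2 * μ) = Theta 0 0 (2 * z) (2 * μ) := by
    rw [← zero_add (1 : ℝ), theta_add_one_left, theta_add_one_right]
    simp only [ofReal_zero, mul_zero, exp_zero, one_mul]
  calc theta1 (z + u) μ * theta1 (z - u) μ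
      = Theta (1 / 2) 1 (2 * z) (2 * μ) * Theta 0 0 (2 * u) (2 * μ) +
          Theta 1 1 (2 * z) (2 * μ) * Theta (1 / 2) 0 (2 * u) (2 * μ) := by
        rw [theta1, theta1, neg_mul_neg, theta_add_mul_theta_sub _ _ _ _ _ _ hμ]
        norm_num
    _ = Theta 0 0 (2 * z) (2 * μ) * Theta (1 / 2) 0 (2 * u) (2 * μ) -
          Theta (1 / 2) 0 (2 * z) (2 * μ) * Theta 0 0 (2 * u) (2 * μ) := by
        rw [hhalf, hone]
        ring

theorem theta1_mul_reflect_div_eq_deriv_logDeriv_sub {z u μ : ℂ} (hμ : 0 < μ.im)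
    (hz : theta1 z μ ≠ 0) (hu : theta1 u μ ≠ 0) :
    theta1 (z + u) μ * theta1 (z - u) μ * deriv (theta1 · μ) 0 ^ 2 /
        (theta1 z μ ^ 2 * theta1 u μ ^ 2) =
      deriv (logDeriv (theta1 · μ)) z - deriv (logDeriv (theta1 · μ)) u := by
  have hdouble (p q : ℝ) : ContDiff ℂ 2 fun z => Theta p q (2 * z) (2 * μ) :=
    ((differentiable_theta p q (by simpa using hμ)).comp (differentiable_id.const_mul 2)).contDiff
  exact mul_reflect_div_eq_deriv_logDeriv_sub (differentiable_theta1 hμ).contDiff (hdouble 0 0)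
    (hdouble (1 / 2) 0) (fun z u => theta1_add_mul_theta1_sub z u hμ) hz hu

/-- The Kronecker function `F(u, γ)`, in its theta-quotient form; `wAB` is `F` times an
exponential. -/
noncomputable def kroneckerF (u γ μ : ℂ) : ℂ :=
  theta1 (γ + u) μ * deriv (theta1 · μ) 0 / (theta1 u μ * theta1 γ μ)

theorem kroneckerF_mul_kroneckerF_neg {u γ μ : ℂ} (hμ : 0 < μ.im) (hu : theta1 u μ ≠ 0)
    (hγ : theta1 γ μ ≠ 0) :
    kroneckerF u γ μ * kroneckerF (-u) γ μ =
      deriv (logDeriv (theta1 · μ)) u - deriv (logDeriv (theta1 · μ)) γ := by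
  rw [← neg_sub, ← theta1_mul_reflect_div_eq_deriv_logDeriv_sub hμ hγ hu, kroneckerF, kroneckerF,
    theta1_neg, ← sub_eq_add_neg]
  field_simp

theorem exists_theta_eq_exp_mul_theta1_add (a b : ℝ) (μ : ℂ) :
    ∃ c ≠ 0, ∀ γ, Theta (a - 1 / 2) (1 / 2 - b) γ μ =
      c * exp (2 * Real.pi * I * a * γ) * theta1 (γ + (a * μ - b)) μ := by
  refine ⟨-exp (Real.pi * I * μ * a ^ 2 + 2 * Real.pi * I * a * (1 / 2 - b)),
    neg_ne_zero.2 (exp_ne_zero _), fun γ => ?_⟩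
  rw [← theta_add_one_left, show a - 1 / 2 + 1 = 1 / 2 + a by ring, sub_eq_add_neg (1 / 2),
    theta_add_add, theta1, neg_mul, neg_mul_neg, ← exp_add]
  push_cast
  ring_nf

/-- The coefficient `w_{AB}` with the rational characteristics `A/K`, `B/K` replaced by real
numbers `a`, `b`; it is normalized by `θ₁ = -θ_{[00]}`, which gives the same quotient. -/
noncomputable def wChar (a b : ℝ) (γ μ : ℂ) : ℂ :=
  Theta (a - 1 / 2) (1 / 2 - b) γ μ * deriv (theta1 · μ) 0 /
    (Theta (a - 1 / 2) (1 / 2 - b) 0 μ * theta1 γ μ)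

lemma wChar_eq_exp_mul_kroneckerF (a b : ℝ) (γ μ : ℂ) :
    wChar a b γ μ = exp (2 * Real.pi * I * a * γ) * kroneckerF (a * μ - b) γ μ := by
  obtain ⟨c, hc, hθ⟩ := exists_theta_eq_exp_mul_theta1_add a b μ
  rw [wChar, kroneckerF, hθ, hθ, mul_zero, exp_zero, zero_add]
  field_simp

lemma wChar_mul_wChar_neg (a b : ℝ) (γ μ : ℂ) :
    wChar a b γ μ * wChar (-a) (-b) γ μ =
      kroneckerF (a * μ - b) γ μ * kroneckerF (-(a * μ - b)) γ μ := by
  have hexp : exp (2 * Real.pi * I * a * γ) * exp (2 * Real.pi * I * (-a : ℝ) * γ) = 1 := by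
    rw [← exp_add, ← exp_zero]
    push_cast
    ring_nf
  have hneg : (-a : ℝ) * μ - (-b : ℝ) = -(a * μ - b) := by
    push_cast
    ring
  rw [wChar_eq_exp_mul_kroneckerF, wChar_eq_exp_mul_kroneckerF, mul_mul_mul_comm, hexp, one_mul,
    hneg]

theorem wAB_product_identity_general (a b : ℝ) {γ μ : ℂ} (hμ : 0 < μ.im) (hγ : theta1 γ μ ≠ 0)
    (hab : Theta (a - 1 / 2) (1 / 2 - b) 0 μ ≠ 0) :
    wChar a b γ μ * wChar (-a) (-b) γ μ =
      deriv (deriv fun z => Theta (a - 1 / 2) (1 / 2 - b) z μ) 0 /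
          Theta (a - 1 / 2) (1 / 2 - b) 0 μ -
        (deriv (fun z => Theta (a - 1 / 2) (1 / 2 - b) z μ) 0 /
          Theta (a - 1 / 2) (1 / 2 - b) 0 μ) ^ 2 -
        deriv (fun z => rho z μ) γ := by
  obtain ⟨c, hc, hθ⟩ := exists_theta_eq_exp_mul_theta1_add a b μ
  have hdiff := differentiable_theta (a - 1 / 2) (1 / 2 - b) hμ
  have hu : theta1 (0 + (a * μ - b)) μ ≠ 0 := right_ne_zero_of_mul (hθ 0 ▸ hab)
  have hshift : deriv (logDeriv fun z => Theta (a - 1 / 2) (1 / 2 - b) z μ) 0 =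
      deriv (logDeriv (theta1 · μ)) (0 + (a * μ - b)) := by
    rw [funext hθ]
    exact deriv_logDeriv_const_mul_exp_mul_comp_add (differentiable_theta1 hμ) hc _ _ hu
  have hrho : (fun z => rho z μ) = logDeriv (theta1 · μ) := rfl
  rw [← deriv_logDeriv (hdiff 0) (hdiff.deriv 0) hab, hshift, hrho, zero_add, wChar_mul_wChar_neg]
  exact kroneckerF_mul_kroneckerF_neg hμ (zero_add (a * μ - b : ℂ) ▸ hu) hγ

lemma thetaAB_zero_zero (K : ℕ) (γ μ : ℂ) : thetaAB K 0 0 γ μ = -theta1 γ μ := by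
  rw [thetaAB, theta1, neg_neg, ← theta_add_one_left]
  norm_num

lemma wAB_eq_wChar (K : ℕ) (A B : ℤ) (γ μ : ℂ) :
    wAB K A B γ μ = wChar (A / K) (B / K) γ μ := by
  simp only [wAB, thetaAB_zero_zero, deriv.fun_neg, mul_neg, neg_div_neg_eq]
  rfl

/-- the identity
`w_{AB}(γ)·w_{−A,−B}(γ) = θ''_{AB}(0)/θ_{AB}(0) − (θ'_{AB}(0)/θ_{AB}(0))² − ρ'(γ)`,
the right-hand side constant being `2πi·Z_{AB}(0)`. -/
theorem wAB_product_identity (K : ℕ) (hK : 2 ≤ K) (A B : ℤ)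
    (hAB : ¬(A % (K : ℤ) = 0 ∧ B % (K : ℤ) = 0)) (μ γ : ℂ) (hμ : 0 < μ.im)
    (h1 : thetaAB K 0 0 γ μ ≠ 0) (h2 : thetaAB K A B 0 μ ≠ 0)
    (h3 : thetaAB K (-A) (-B) 0 μ ≠ 0) :
    wAB K A B γ μ * wAB K (-A) (-B) γ μ
      = deriv (deriv (fun z => thetaAB K A B z μ)) 0 / thetaAB K A B 0 μ
          - (deriv (fun z => thetaAB K A B z μ) 0 / thetaAB K A B 0 μ)^2
          - deriv (fun z => rho z μ) γ := by
  rw [wAB_eq_wChar, wAB_eq_wChar, Int.cast_neg, Int.cast_neg, neg_div, neg_div]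
  exact wAB_product_identity_general _ _ hμ (neg_ne_zero.1 (thetaAB_zero_zero K γ μ ▸ h1)) h2
end

section
/- Trigonometric degeneration of the K = 2 elliptic r-matrix coefficients: for every γ ∈ ℂ with γ ∉ ℤ, as the real parameter t tends to +∞ one has w_{10}(γ; it) → π/sin(πγ), w_{11}(γ; it) → π/sin(πγ), and w_{01}(γ; it) → π·cot(πγ). Consequently (with the identification σ_{10} = σ₁, σ_{11} = iσ₂, σ_{01} = σ₃ of the Pauli matrices) the elliptic r-matrix r(γ;μ) = ∑_{(A,B)≠(0,0)} w_{AB}(γ;μ)·σ_{AB}⊗σ^{AB} tends to the trigonometric r-matrix r₀(γ) = (1/2)(π/sin πγ)(σ₁⊗σ₁) + (1/2)(π/sin πγ)(σ₂⊗σ₂) + (1/2)(π cot πγ)(σ₃⊗σ₃). -/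
open Complex Filter

/-- The Pauli matrix `σ₁`. -/
def pauli1 : Matrix (Fin 2) (Fin 2) ℂ := !![0, 1; 1, 0]

/-- The Pauli matrix `σ₂`. -/
def pauli2 : Matrix (Fin 2) (Fin 2) ℂ := !![0, -Complex.I; Complex.I, 0]

/-- The Pauli matrix `σ₃`. -/
def pauli3 : Matrix (Fin 2) (Fin 2) ℂ := !![1, 0; 0, -1]

open Kronecker in
/-- The trigonometric r-matrix `r₀(γ)`. -/
noncomputable def rtrig (γ : ℂ) : Matrix (Fin 2 × Fin 2) (Fin 2 × Fin 2) ℂ :=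
  ((1 : ℂ)/2 * ((Real.pi : ℂ) / Complex.sin ((Real.pi : ℂ) * γ))) • (pauli1 ⊗ₖ pauli1)
  + ((1 : ℂ)/2 * ((Real.pi : ℂ) / Complex.sin ((Real.pi : ℂ) * γ))) • (pauli2 ⊗ₖ pauli2)
  + ((1 : ℂ)/2 * ((Real.pi : ℂ) * Complex.cot ((Real.pi : ℂ) * γ))) • (pauli3 ⊗ₖ pauli3)

/-!
As `Im μ → ∞` the nome `exp (πiμ)` tends to `0`, so each theta series is asymptotic to its terms
with minimal `(m + p) ^ 2`: the single index `m = 0` if `|p| < 1/2`, the two indices `m = 0, 1` if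
`p = -1/2`. The minimal powers of the nome cancel in `w_{AB}`, which leaves a quotient of
exponentials, sines and cosines.
-/

section Degeneration

open scoped Real Topology

section NomePow

/-- The power `q ^ x` of the nome `q = exp (πiμ)`, with the branch fixed by `μ`. -/
noncomputable def nomePow (x : ℝ) (μ : ℂ) : ℂ := cexp (π * I * μ * x)

lemma nomePow_ne_zero (x : ℝ) (μ : ℂ) : nomePow x μ ≠ 0 := exp_ne_zero _

lemma nomePow_add (x y : ℝ) (μ : ℂ) : nomePow (x + y) μ = nomePow x μ * nomePow y μ := by
  rw [nomePow, nomePow, nomePow, ← exp_add, ofReal_add, mul_add]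

lemma norm_nomePow (x : ℝ) (μ : ℂ) : ‖nomePow x μ‖ = Real.exp (-(x * π * μ.im)) := by
  rw [nomePow, norm_exp]
  simp [mul_comm, mul_left_comm]

lemma norm_nomePow_le_of_im_le {x : ℝ} (hx : 0 ≤ x) {μ ν : ℂ} (h : μ.im ≤ ν.im) :
    ‖nomePow x ν‖ ≤ ‖nomePow x μ‖ := by
  rw [norm_nomePow, norm_nomePow]
  gcongr

lemma tendsto_nomePow_zero {x : ℝ} (hx : 0 < x) :
    Tendsto (nomePow x) (comap im atTop) (𝓝 0) := by
  refine squeeze_zero_norm (fun μ => (norm_nomePow x μ).le) ?_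
  exact Real.tendsto_exp_neg_atTop_nhds_zero.comp
    (tendsto_comap.const_mul_atTop (mul_pos hx Real.pi_pos))

theorem tendsto_nomePow_neg_mul_of_hasSum {ι : Type*} {b : ι → ℂ} {e : ι → ℝ} {F : ℂ → ℂ}
    (hF : ∀ μ : ℂ, 0 < μ.im → HasSum (fun i => b i * nomePow (e i) μ) (F μ))
    {c : ℝ} {S : Finset ι} (h_eq : ∀ i ∈ S, e i = c) (h_lt : ∀ i ∉ S, c < e i) :
    Tendsto (fun μ => nomePow (-c) μ * F μ) (comap im atTop) (𝓝 (∑ i ∈ S, b i)) := by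
  classical
  have c_le (i : ι) : c ≤ e i := by
    by_cases hi : i ∈ S
    exacts [(h_eq i hi).ge, (h_lt i hi).le]
  have hasSum_shift {μ : ℂ} (hμ : 0 < μ.im) :
      HasSum (fun i => b i * nomePow (e i - c) μ) (nomePow (-c) μ * F μ) := by
    refine ((hF μ hμ).mul_left (nomePow (-c) μ)).congr_fun fun i => ?_
    rw [sub_eq_add_neg, nomePow_add]
    ring
  have tendsto_term (i : ι) : Tendsto (fun μ => b i * nomePow (e i - c) μ) (comap im atTop)
      (𝓝 (if i ∈ S then b i else 0)) := by
    split_ifs with hi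
    · simpa [h_eq i hi, nomePow] using tendsto_const_nhds
    · simpa only [mul_zero] using
        (tendsto_nomePow_zero (sub_pos.2 (h_lt i hi))).const_mul (b i)
  have norm_term_le : ∀ᶠ μ : ℂ in comap im atTop, ∀ i,
      ‖b i * nomePow (e i - c) μ‖ ≤ ‖b i * nomePow (e i - c) I‖ := by
    filter_upwards [tendsto_comap.eventually_ge_atTop 1] with μ hμ i
    rw [norm_mul, norm_mul]
    gcongr
    exact norm_nomePow_le_of_im_le (sub_nonneg.2 (c_le i)) (by rwa [I_im])
  have tendsto_tsum := tendsto_tsum_of_dominated_convergence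
    (hasSum_shift (μ := I) (by simp)).summable.norm tendsto_term norm_term_le
  rw [tsum_eq_sum (s := S) fun i hi => if_neg hi,
    Finset.sum_congr rfl fun i hi => if_pos hi] at tendsto_tsum
  refine tendsto_tsum.congr' ?_
  filter_upwards [tendsto_comap.eventually_gt_atTop 0] with μ hμ
  exact (hasSum_shift hμ).tsum_eq

end NomePow

section Theta

variable (p q : ℝ) (γ : ℂ) {μ : ℂ}

/-- The coefficient of `exp (πiμ(m + p)²)` in the series defining `Theta p q γ μ`. -/
noncomputable def thetaCoeff (m : ℤ) : ℂ := cexp (2 * π * I * (m + p) * (γ + q))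

/-- The factor relating `Theta p q γ μ` to `jacobiTheta₂` at the shifted point `γ + q + pμ`. -/
noncomputable def thetaFactor (μ : ℂ) : ℂ := cexp (π * I * μ * p ^ 2 + 2 * π * I * p * (γ + q))

lemma thetaFactor_mul_jacobiTheta₂_term (m : ℤ) (μ : ℂ) :
    thetaFactor p q γ μ * jacobiTheta₂_term m (γ + q + p * μ) μ =
      thetaCoeff p q γ m * nomePow ((m + p) ^ 2) μ := by
  rw [thetaFactor, jacobiTheta₂_term, thetaCoeff, nomePow, ← exp_add, ← exp_add]
  push_cast
  ring_nf

lemma Theta_eq_thetaFactor_mul_jacobiTheta₂ (μ : ℂ) :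
    Theta p q γ μ = thetaFactor p q γ μ * jacobiTheta₂ (γ + q + p * μ) μ := by
  rw [Theta, jacobiTheta₂, ← tsum_mul_left]
  refine tsum_congr fun m => ?_
  rw [jacobiTheta₂_term, thetaFactor, ← exp_add]
  ring_nf

lemma hasSum_Theta (hμ : 0 < μ.im) :
    HasSum (fun m : ℤ => thetaCoeff p q γ m * nomePow ((m + p) ^ 2) μ) (Theta p q γ μ) := by
  rw [Theta_eq_thetaFactor_mul_jacobiTheta₂]
  simp only [← thetaFactor_mul_jacobiTheta₂_term]
  exact (hasSum_jacobiTheta₂_term _ hμ).mul_left _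

lemma hasDerivAt_thetaFactor (μ : ℂ) :
    HasDerivAt (fun z => thetaFactor p q z μ) (thetaFactor p q γ μ * (2 * π * I * p)) γ := by
  have h := (((hasDerivAt_id γ).add_const (q : ℂ)).const_mul (2 * π * I * p)).const_add
    (π * I * μ * p ^ 2)
  simpa only [mul_one] using! h.cexp

lemma hasDerivAt_Theta (hμ : 0 < μ.im) :
    HasDerivAt (fun z => Theta p q z μ)
      (thetaFactor p q γ μ * (2 * π * I * p) * jacobiTheta₂ (γ + q + p * μ) μ +
        thetaFactor p q γ μ * jacobiTheta₂' (γ + q + p * μ) μ) γ := by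
  simp only [Theta_eq_thetaFactor_mul_jacobiTheta₂, add_assoc]
  exact (hasDerivAt_thetaFactor p q γ μ).mul
    ((hasDerivAt_jacobiTheta₂_fst (γ + (q + p * μ)) hμ).comp_add_const γ (q + p * μ))

lemma hasSum_deriv_Theta (hμ : 0 < μ.im) :
    HasSum (fun m : ℤ => 2 * π * I * (m + p) * thetaCoeff p q γ m * nomePow ((m + p) ^ 2) μ)
      (deriv (fun z => Theta p q z μ) γ) := by
  rw [(hasDerivAt_Theta p q γ hμ).deriv]
  refine (((hasSum_jacobiTheta₂_term _ hμ).mul_left _).add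
    ((hasSum_jacobiTheta₂'_term _ hμ).mul_left _)).congr_fun fun m => ?_
  rw [mul_assoc, ← thetaFactor_mul_jacobiTheta₂_term, jacobiTheta₂'_term]
  ring

lemma sq_lt_add_sq_of_abs_lt_half {p : ℝ} (hp : |p| < 1 / 2) {m : ℤ} (hm : m ≠ 0) :
    p ^ 2 < (m + p) ^ 2 := by
  have one_le : (1 : ℝ) ≤ |(m : ℝ)| := mod_cast Int.one_le_abs hm
  have := abs_sub_abs_le_abs_add (m : ℝ) p
  exact sq_lt_sq.2 (by linarith)

lemma quarter_lt_add_neg_half_sq {m : ℤ} (h0 : m ≠ 0) (h1 : m ≠ 1) :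
    1 / 4 < ((m : ℝ) + (-(1 / 2) : ℝ)) ^ 2 := by
  have : (0 : ℝ) < m * (m - 1) := by
    rcases lt_or_gt_of_ne h0 with hm | hm
    · exact_mod_cast mul_pos_of_neg_of_neg hm (by omega : m - 1 < 0)
    · exact_mod_cast mul_pos hm (by omega : 0 < m - 1)
  linarith

theorem tendsto_Theta_of_abs_lt_half {p : ℝ} (hp : |p| < 1 / 2) :
    Tendsto (fun μ => nomePow (-p ^ 2) μ * Theta p q γ μ) (comap im atTop)
      (𝓝 (cexp (2 * π * I * p * (γ + q)))) := by
  simpa [thetaCoeff] using tendsto_nomePow_neg_mul_of_hasSum (S := {0}) (c := p ^ 2)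
    (fun μ hμ => hasSum_Theta p q γ hμ) (by simp)
    (fun m hm => sq_lt_add_sq_of_abs_lt_half hp (by simpa using hm))

lemma tendsto_nomePow_mul_of_hasSum_neg_half {b : ℤ → ℂ} {F : ℂ → ℂ}
    (hF : ∀ μ : ℂ, 0 < μ.im →
      HasSum (fun m : ℤ => b m * nomePow ((m + (-(1 / 2) : ℝ)) ^ 2) μ) (F μ)) :
    Tendsto (fun μ => nomePow (-(1 / 4)) μ * F μ) (comap im atTop) (𝓝 (b 0 + b 1)) := by
  rw [← Finset.sum_pair zero_ne_one]
  refine tendsto_nomePow_neg_mul_of_hasSum hF (fun m hm => ?_) (fun m hm => ?_)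
  · rcases Finset.mem_insert.1 hm with rfl | hm
    · norm_num
    · rw [Finset.mem_singleton.1 hm]
      norm_num
  · simp only [Finset.mem_insert, Finset.mem_singleton, not_or] at hm
    exact quarter_lt_add_neg_half_sq hm.1 hm.2

lemma thetaCoeff_neg_half_zero :
    thetaCoeff (-(1 / 2)) q γ 0 = cexp (-(π * (γ + q)) * I) := by
  rw [thetaCoeff]
  push_cast
  ring_nf

lemma thetaCoeff_neg_half_one :
    thetaCoeff (-(1 / 2)) q γ 1 = cexp (π * (γ + q) * I) := by
  rw [thetaCoeff]
  push_cast
  ring_nf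

theorem tendsto_Theta_neg_half :
    Tendsto (fun μ => nomePow (-(1 / 4)) μ * Theta (-(1 / 2)) q γ μ) (comap im atTop)
      (𝓝 (2 * cos (π * (γ + q)))) := by
  convert tendsto_nomePow_mul_of_hasSum_neg_half
    fun μ hμ => hasSum_Theta (-(1 / 2)) q γ hμ using 2
  rw [thetaCoeff_neg_half_zero, thetaCoeff_neg_half_one, two_cos, add_comm]

theorem tendsto_deriv_Theta_neg_half :
    Tendsto (fun μ => nomePow (-(1 / 4)) μ * deriv (fun z => Theta (-(1 / 2)) q z μ) γ)
      (comap im atTop) (𝓝 (-2 * π * sin (π * (γ + q)))) := by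
  convert tendsto_nomePow_mul_of_hasSum_neg_half
    fun μ hμ => hasSum_deriv_Theta (-(1 / 2)) q γ hμ using 2
  rw [thetaCoeff_neg_half_zero, thetaCoeff_neg_half_one, sin]
  push_cast
  ring

end Theta

section Coefficients

variable {K : ℕ} {A B : ℤ} {γ : ℂ}

lemma thetaAB_zero_left (K : ℕ) (B : ℤ) (γ μ : ℂ) :
    thetaAB K 0 B γ μ = Theta (-(1 / 2)) (1 / 2 - B / K) γ μ := by
  simp [thetaAB]

lemma tendsto_thetaAB_zero_left (K : ℕ) (B : ℤ) (γ : ℂ) :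
    Tendsto (fun μ => nomePow (-(1 / 4)) μ * thetaAB K 0 B γ μ) (comap im atTop)
      (𝓝 (-2 * sin (π * γ - π * (B / K)))) := by
  simp only [thetaAB_zero_left]
  convert tendsto_Theta_neg_half (1 / 2 - B / K) γ using 2
  rw [neg_mul, ← mul_neg, ← cos_add_pi_div_two]
  push_cast
  ring_nf

lemma tendsto_thetaAB_zero_zero (K : ℕ) (γ : ℂ) :
    Tendsto (fun μ => nomePow (-(1 / 4)) μ * thetaAB K 0 0 γ μ) (comap im atTop)
      (𝓝 (-2 * sin (π * γ))) := by
  simpa using tendsto_thetaAB_zero_left K 0 γ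

lemma tendsto_deriv_thetaAB_zero_zero (K : ℕ) :
    Tendsto (fun μ => nomePow (-(1 / 4)) μ * deriv (fun z => thetaAB K 0 0 z μ) 0)
      (comap im atTop) (𝓝 (-2 * π)) := by
  simp only [thetaAB_zero_left]
  convert tendsto_deriv_Theta_neg_half (1 / 2 - (0 : ℤ) / K) 0 using 2
  simp [← div_eq_mul_inv]

lemma tendsto_wAB_of_tendsto_thetaAB (hγ : sin (π * γ) ≠ 0) {c : ℝ} {x y : ℂ}
    (hx : Tendsto (fun μ => nomePow c μ * thetaAB K A B γ μ) (comap im atTop) (𝓝 x))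
    (hy : Tendsto (fun μ => nomePow c μ * thetaAB K A B 0 μ) (comap im atTop) (𝓝 y))
    (hy0 : y ≠ 0) :
    Tendsto (wAB K A B γ) (comap im atTop) (𝓝 (x / y * (π / sin (π * γ)))) := by
  have h := (hx.div hy hy0).mul ((tendsto_deriv_thetaAB_zero_zero K).div
    (tendsto_thetaAB_zero_zero K γ) (mul_ne_zero (by norm_num) hγ))
  rw [mul_div_mul_left _ _ (by norm_num : (-2 : ℂ) ≠ 0)] at h
  refine h.congr fun μ => ?_
  simp only [Pi.div_apply, mul_div_mul_left _ _ (nomePow_ne_zero _ _)]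
  rw [wAB, div_mul_div_comm]

theorem tendsto_wAB_of_pos_of_lt (hγ : sin (π * γ) ≠ 0) (hA : 0 < A) (hAK : A < K) :
    Tendsto (wAB K A B γ) (comap im atTop)
      (𝓝 (cexp (2 * π * I * (A / K - 1 / 2) * γ) * (π / sin (π * γ)))) := by
  have hA' : (0 : ℝ) < A := mod_cast hA
  have hAK' : (A : ℝ) < K := mod_cast hAK
  have abs_lt_half : |(A : ℝ) / K - 1 / 2| < 1 / 2 := by
    have hK : (0 : ℝ) < K := hA'.trans hAK'
    have := div_pos hA' hK
    have := (div_lt_one hK).2 hAK'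
    rw [abs_lt]
    constructor <;> linarith
  convert tendsto_wAB_of_tendsto_thetaAB hγ (tendsto_Theta_of_abs_lt_half _ γ abs_lt_half)
    (tendsto_Theta_of_abs_lt_half _ 0 abs_lt_half) (exp_ne_zero _) using 3
  rw [← exp_sub]
  push_cast
  ring_nf

theorem tendsto_wAB_zero_left (hγ : sin (π * γ) ≠ 0) (hB : sin (π * (B / K)) ≠ 0) :
    Tendsto (wAB K 0 B γ) (comap im atTop)
      (𝓝 (π * (cot (π * γ) - cot (π * (B / K))))) := by
  convert tendsto_wAB_of_tendsto_thetaAB hγ (tendsto_thetaAB_zero_left K B γ)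
    (tendsto_thetaAB_zero_left K B 0) (by simpa using hB) using 2
  rw [cot_eq_cos_div_sin, cot_eq_cos_div_sin, mul_zero, zero_sub, sin_neg, sin_sub]
  generalize (π : ℂ) * (B / K) = β at hB ⊢
  field_simp
  ring

end Coefficients

section Pauli

lemma epsK_two : epsK 2 = -1 := by
  rw [epsK, ← exp_pi_mul_I]
  push_cast
  ring_nf

lemma Fmat_two : Fmat 2 = pauli3 := by
  ext i j
  fin_cases i <;> fin_cases j <;> simp [Fmat, epsK_two, pauli3]

lemma Hmat_two : Hmat 2 = pauli1 := by
  ext i j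
  fin_cases i <;> fin_cases j <;> simp [Hmat, pauli1]

lemma pauli1_mul_pauli3 : pauli1 * pauli3 = -I • pauli2 := by
  ext i j
  fin_cases i <;> fin_cases j <;> simp [pauli1, pauli2, pauli3]

lemma sigmaAB_two_one_zero : sigmaAB 2 1 0 = pauli1 := by
  simp [sigmaAB, Hmat_two]

lemma sigmaAB_two_zero_one : sigmaAB 2 0 1 = pauli3 := by
  simp [sigmaAB, Fmat_two]

/-- With these conventions `σ₁₁ = -iσ₂`, not `iσ₂`; the sign cancels in `σ₁₁ ⊗ σ¹¹`. -/
lemma sigmaAB_two_one_one : sigmaAB 2 1 1 = -I • pauli2 := by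
  simp [sigmaAB, Hmat_two, Fmat_two, pauli1_mul_pauli3]

lemma sigmaDualAB_two (A B : ℤ) :
    sigmaDualAB 2 A B = ((-1 : ℂ) ^ (A * B) / 2) • sigmaAB 2 A B := by
  have neg_emod_two (n : ℤ) : -n % 2 = n % 2 := by omega
  simp [sigmaDualAB, sigmaAB, epsK_two, neg_emod_two, ← inv_zpow]

open Kronecker in
lemma rmat_two_eq_sum_pauli (γ μ : ℂ) :
    rmat 2 γ μ = (1 / 2 * wAB 2 1 0 γ μ) • (pauli1 ⊗ₖ pauli1)
      + (1 / 2 * wAB 2 1 1 γ μ) • (pauli2 ⊗ₖ pauli2)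
      + (1 / 2 * wAB 2 0 1 γ μ) • (pauli3 ⊗ₖ pauli3) := by
  have kronecker_one_zero :
      sigmaAB 2 1 0 ⊗ₖ sigmaDualAB 2 1 0 = (1 / 2 : ℂ) • (pauli1 ⊗ₖ pauli1) := by
    simp [sigmaDualAB_two, sigmaAB_two_one_zero, Matrix.kronecker_smul]
  have kronecker_one_one :
      sigmaAB 2 1 1 ⊗ₖ sigmaDualAB 2 1 1 = (1 / 2 : ℂ) • (pauli2 ⊗ₖ pauli2) := by
    simp only [sigmaDualAB_two, sigmaAB_two_one_one, Matrix.kronecker_smul,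
      Matrix.smul_kronecker, smul_smul]
    congr 1
    linear_combination (-1 / 2 : ℂ) * I_sq
  have kronecker_zero_one :
      sigmaAB 2 0 1 ⊗ₖ sigmaDualAB 2 0 1 = (1 / 2 : ℂ) • (pauli3 ⊗ₖ pauli3) := by
    simp [sigmaDualAB_two, sigmaAB_two_zero_one, Matrix.kronecker_smul]
  calc rmat 2 γ μ
      = wAB 2 0 1 γ μ • (sigmaAB 2 0 1 ⊗ₖ sigmaDualAB 2 0 1)
        + (wAB 2 1 0 γ μ • (sigmaAB 2 1 0 ⊗ₖ sigmaDualAB 2 1 0)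
        + wAB 2 1 1 γ μ • (sigmaAB 2 1 1 ⊗ₖ sigmaDualAB 2 1 1)) := by
        simp [rmat, Finset.sum_range_succ]
    _ = _ := by
        rw [kronecker_one_zero, kronecker_one_one, kronecker_zero_one]
        module

end Pauli

lemma tendsto_ofReal_mul_I_comap_im_atTop :
    Tendsto (fun t : ℝ => (t : ℂ) * I) atTop (comap im atTop) :=
  tendsto_comap_iff.2 (tendsto_id.congr fun t => by simp)

theorem rmat_trigonometric_limit_general {γ : ℂ} (hγ : ∀ n : ℤ, γ ≠ n) :
    Tendsto (wAB 2 1 0 γ) (comap im atTop) (𝓝 (π / sin (π * γ))) ∧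
    Tendsto (wAB 2 1 1 γ) (comap im atTop) (𝓝 (π / sin (π * γ))) ∧
    Tendsto (wAB 2 0 1 γ) (comap im atTop) (𝓝 (π * cot (π * γ))) ∧
    Tendsto (rmat 2 γ) (comap im atTop) (𝓝 (rtrig γ)) := by
  have hs : sin (π * γ) ≠ 0 := sin_pi_mul_ne_zero fun ⟨n, hn⟩ => hγ n hn.symm
  have h1 (B : ℤ) : Tendsto (wAB 2 1 B γ) (comap im atTop) (𝓝 (π / sin (π * γ))) := by
    simpa using tendsto_wAB_of_pos_of_lt (K := 2) (B := B) hs one_pos (by norm_num)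
  have h01 : Tendsto (wAB 2 0 1 γ) (comap im atTop) (𝓝 (π * cot (π * γ))) := by
    have cot_half : cot (π * ((1 : ℤ) / (2 : ℕ))) = 0 := by
      simp [cot_eq_cos_div_sin, ← div_eq_mul_inv]
    simpa only [cot_half, sub_zero] using
      tendsto_wAB_zero_left (K := 2) (B := 1) hs (by simp [← div_eq_mul_inv])
  refine ⟨h1 0, h1 1, h01, ?_⟩
  simp only [funext (rmat_two_eq_sum_pauli γ)]
  exact ((((h1 0).const_mul _).smul_const _).add (((h1 1).const_mul _).smul_const _)).add
    ((h01.const_mul _).smul_const _)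

end Degeneration

/-- trigonometric degeneration of the `K = 2` elliptic r-matrix:
as `t → +∞`, `w₁₀(γ;it) → π/sin(πγ)`, `w₁₁(γ;it) → π/sin(πγ)`,
`w₀₁(γ;it) → π·cot(πγ)`, and `r(γ;it) → r₀(γ)`. -/
theorem rmat_trigonometric_limit (γ : ℂ) (hγ : ∀ n : ℤ, γ ≠ (n : ℂ)) :
    Filter.Tendsto (fun t : ℝ => wAB 2 1 0 γ ((t : ℂ) * Complex.I)) Filter.atTop
      (nhds ((Real.pi : ℂ) / Complex.sin ((Real.pi : ℂ) * γ))) ∧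
    Filter.Tendsto (fun t : ℝ => wAB 2 1 1 γ ((t : ℂ) * Complex.I)) Filter.atTop
      (nhds ((Real.pi : ℂ) / Complex.sin ((Real.pi : ℂ) * γ))) ∧
    Filter.Tendsto (fun t : ℝ => wAB 2 0 1 γ ((t : ℂ) * Complex.I)) Filter.atTop
      (nhds ((Real.pi : ℂ) * Complex.cot ((Real.pi : ℂ) * γ))) ∧
    Filter.Tendsto (fun t : ℝ => rmat 2 γ ((t : ℂ) * Complex.I)) Filter.atTop
      (nhds (rtrig γ)) := by
  have hI := tendsto_ofReal_mul_I_comap_im_atTop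
  obtain ⟨h10, h11, h01, hr⟩ := rmat_trigonometric_limit_general hγ
  exact ⟨h10.comp hI, h11.comp hI, h01.comp hI, hr.comp hI⟩
end

section
/- Compatibility of the tau-function of the elliptic system: let K ≥ 2 and N ≥ 1 be integers, U ⊆ ℂ^{2N} open with coordinates λ = (λ₁,…,λ_{2N}), and suppose given differentiable functions μ : U → ℂ with Im μ > 0 everywhere, γ_m, α_m : U → ℂ and J_m : U → (K×K complex matrices) for 1 ≤ m ≤ 2N, with α_m nowhere vanishing, such that at every point of U and for all m ≠ n: (i) θ_{[00]}(γ_m − γ_n; μ) ≠ 0 and θ_{[AB]}(0; μ) ≠ 0 for all 0 ≤ A,B ≤ K−1 with (A,B) ≠ (0,0); (ii) ∂α_m/∂λ_n = −2·α_m·α_n·ρ'(γ_m − γ_n; μ), where ρ' = ∂_γρ; (iii) ∂J_m/∂λ_n = −α_n·ρ'(γ_m − γ_n; μ)·J_m − α_m·∑_{(A,B)≠(0,0)} (∂_γw_{AB})(γ_m − γ_n; μ)·tr(σ^{AB} J_n)·σ_{AB} − [J_m, ∑_{(A,B)≠(0,0)} w_{AB}(γ_m − γ_n; μ)·tr(σ^{AB}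 J_n)·σ_{AB}], where the sums run over 0 ≤ A,B ≤ K−1 with (A,B) ≠ (0,0) and [·,·] is the matrix commutator. Then for all m ≠ n, at every point of U, ∂/∂λ_n (tr(J_m²)/(2α_m)) = ∂/∂λ_m (tr(J_n²)/(2α_n)), and both are equal to −∑_{(A,B)≠(0,0)} (∂_γw_{AB})(γ_m − γ_n; μ)·tr(σ_{AB} J_m)·tr(σ^{AB} J_n). In particular the equations ∂(log τ)/∂λ_m = tr(J_m²)/(2α_m) defining the tau-function are compatible. -/
open Complex Filter

/-- `tr₂(∑ f_{AB} σ_{AB}⊗σ^{AB} · (I⊗M)) = ∑ f_{AB}·tr(σ^{AB}M)·σ_{AB}`, the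
"partial trace in the second factor" building block of the elliptic system. -/
noncomputable def halfTrace (K : ℕ) (f : ℤ → ℤ → ℂ) (M : Matrix (Fin K) (Fin K) ℂ) :
    Matrix (Fin K) (Fin K) ℂ :=
  ∑ A ∈ Finset.range K, ∑ B ∈ Finset.range K,
    if A = 0 ∧ B = 0 then 0
    else (f A B * Matrix.trace (sigmaDualAB K A B * M)) • sigmaAB K A B

/-!
The `ρ'` terms of the equations for `α_m` and `J_m` cancel in the derivative of
`tr(J_m²)/(2α_m)`, and the commutator is traceless against `J_m`, so only
`-tr(J_m · tr₂(r' J_n⁽²⁾))` survives. Exchanging `m` and `n` replaces `γ_m - γ_n` by its negative;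
since `w_{-A,-B}(-γ) = -w_{AB}(γ)` and `σ^{AB}` is proportional to `σ_{-A,-B}`, the substitution
`(A, B) ↦ (-A, -B)` modulo `K` then identifies the two derivatives.
-/

/-- The sum `∑_{(A,B) ≠ (0,0)} f A B` over `0 ≤ A, B < K`, written with the same conditional as the
sums in `halfTrace` so that the two agree definitionally. -/
def puncturedSum {M : Type*} [AddCommMonoid M] (K : ℕ) (f : ℤ → ℤ → M) : M :=
  ∑ A ∈ Finset.range K, ∑ B ∈ Finset.range K, if A = 0 ∧ B = 0 then 0 else f A B

-- Unlike `A = 0 ∧ B = 0`, the divisibility condition is `K`-periodic in `A` and `B`.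
lemma puncturedSum_eq_sum_ite_dvd {M : Type*} [AddCommMonoid M] (K : ℕ) (f : ℤ → ℤ → M) :
    puncturedSum K f = ∑ A ∈ Finset.range K, ∑ B ∈ Finset.range K,
      if (K : ℤ) ∣ A ∧ (K : ℤ) ∣ B then 0 else f A B := by
  have dvd_iff : ∀ A ∈ Finset.range K, (K : ℤ) ∣ A ↔ A = 0 := fun A hA => by
    rw [Int.natCast_dvd_natCast, Nat.dvd_iff_mod_eq_zero, Nat.mod_eq_of_lt (Finset.mem_range.1 hA)]
  refine Finset.sum_congr rfl fun A hA => Finset.sum_congr rfl fun B hB => ?_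
  simp only [dvd_iff A hA, dvd_iff B hB]

lemma sum_range_comp_neg_of_periodic {M : Type*} [AddCancelCommMonoid M] {K : ℕ} {f : ℤ → M}
    (hf : Function.Periodic f K) :
    ∑ A ∈ Finset.range K, f (-A) = ∑ A ∈ Finset.range K, f A := by
  have hflip : ∑ A ∈ Finset.range (K + 1), f (-A) = ∑ A ∈ Finset.range (K + 1), f A := by
    rw [← Finset.sum_flip (fun A : ℕ => f A)]
    refine Finset.sum_congr rfl fun A hA => ?_
    rw [Nat.cast_sub (Finset.mem_range_succ_iff.1 hA), ← hf (-A), neg_add_eq_sub]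
  have hends : f (-K) = f K := by rw [hf.eq, hf.neg_eq]
  rw [Finset.sum_range_succ, Finset.sum_range_succ, hends] at hflip
  exact add_right_cancel hflip

lemma puncturedSum_comp_neg {M : Type*} [AddCancelCommMonoid M] {K : ℕ} {f : ℤ → ℤ → M}
    (hleft : ∀ B, Function.Periodic (fun A => f A B) K) (hright : ∀ A, Function.Periodic (f A) K) :
    puncturedSum K (fun A B => f (-A) (-B)) = puncturedSum K f := by
  let g : ℤ → ℤ → M := fun A B => if (K : ℤ) ∣ A ∧ (K : ℤ) ∣ B then 0 else f A B
  have hgleft : ∀ B, Function.Periodic (fun A => g A B) K := fun B A => by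
    simp only [g, dvd_add_self_right, hleft B A]
  have hgright : ∀ A, Function.Periodic (g A) K := fun A B => by
    simp only [g, dvd_add_self_right, hright A B]
  calc puncturedSum K (fun A B => f (-A) (-B))
      = ∑ A ∈ Finset.range K, ∑ B ∈ Finset.range K, g (-A) (-B) := by
        simp only [puncturedSum_eq_sum_ite_dvd, g, dvd_neg]
    _ = ∑ A ∈ Finset.range K, ∑ B ∈ Finset.range K, g (-A) B :=
        Finset.sum_congr rfl fun A _ => sum_range_comp_neg_of_periodic (hgright (-A))
    _ = ∑ A ∈ Finset.range K, ∑ B ∈ Finset.range K, g A B :=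
        sum_range_comp_neg_of_periodic (f := fun A => ∑ B ∈ Finset.range K, g A B) fun A =>
          Finset.sum_congr rfl fun B _ => hgleft B A
    _ = puncturedSum K f := (puncturedSum_eq_sum_ite_dvd K f).symm

lemma Theta_neg (p q : ℝ) (γ μ : ℂ) : Theta (-p) (-q) (-γ) μ = Theta p q γ μ := by
  unfold Theta
  rw [← (Equiv.neg ℤ).tsum_eq]
  refine tsum_congr fun m => ?_
  congr 1
  simp only [Equiv.neg_apply]
  push_cast
  ring

lemma Theta_add_intCast_left (p q : ℝ) (a : ℤ) (γ μ : ℂ) :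
    Theta (p + a) q γ μ = Theta p q γ μ := by
  unfold Theta
  rw [← (Equiv.subRight a).tsum_eq]
  refine tsum_congr fun m => ?_
  congr 1
  simp only [Equiv.subRight_apply]
  push_cast
  ring

lemma Theta_add_intCast_right (p q : ℝ) (b : ℤ) (γ μ : ℂ) :
    Theta p (q + b) γ μ = exp (2 * Real.pi * I * p * b) * Theta p q γ μ := by
  unfold Theta
  rw [← tsum_mul_left]
  refine tsum_congr fun m => ?_
  rw [← exp_add, exp_eq_exp_iff_exists_int]
  refine ⟨m * b, ?_⟩
  push_cast
  ring

lemma thetaAB_neg (K : ℕ) (A B : ℤ) (γ μ : ℂ) :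
    thetaAB K (-A) (-B) (-γ) μ = -exp (-(2 * Real.pi * I * (A / K))) * thetaAB K A B γ μ := by
  have hp : ((-A : ℤ) : ℝ) / K - 1 / 2 = -((A : ℝ) / K - 1 / 2) + (-1 : ℤ) := by
    push_cast
    ring
  have hq : 1 / 2 - ((-B : ℤ) : ℝ) / K = -(1 / 2 - (B : ℝ) / K) + (1 : ℤ) := by
    push_cast
    ring
  have hexp : exp (2 * Real.pi * I * ((-((A : ℝ) / K - 1 / 2) : ℝ) : ℂ) * (1 : ℤ)) =
      -exp (-(2 * Real.pi * I * (A / K))) := by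
    rw [← exp_add_pi_mul_I]
    push_cast
    ring_nf
  unfold thetaAB
  rw [hp, hq, Theta_add_intCast_left, Theta_add_intCast_right, Theta_neg, hexp]

lemma thetaAB_zero_zero_neg (K : ℕ) (γ μ : ℂ) : thetaAB K 0 0 (-γ) μ = -thetaAB K 0 0 γ μ := by
  simpa using thetaAB_neg K 0 0 γ μ

lemma thetaAB_periodic_left (K : ℕ) [NeZero K] (B : ℤ) (γ μ : ℂ) :
    Function.Periodic (fun A => thetaAB K A B γ μ) K := fun A => by
  have hp : ((A + K : ℤ) : ℝ) / K - 1 / 2 = ((A : ℝ) / K - 1 / 2) + (1 : ℤ) := by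
    push_cast
    rw [add_div, div_self (NeZero.ne _)]
    ring
  simp only [thetaAB, hp, Theta_add_intCast_left]

lemma thetaAB_add_right (K : ℕ) [NeZero K] (A B : ℤ) (γ μ : ℂ) :
    thetaAB K A (B + K) γ μ = -exp (-(2 * Real.pi * I * (A / K))) * thetaAB K A B γ μ := by
  have hq : 1 / 2 - ((B + K : ℤ) : ℝ) / K = (1 / 2 - (B : ℝ) / K) + (-1 : ℤ) := by
    push_cast
    rw [add_div, div_self (NeZero.ne _)]
    ring
  have hexp : exp (2 * Real.pi * I * (((A : ℝ) / K - 1 / 2 : ℝ) : ℂ) * (-1 : ℤ)) =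
      -exp (-(2 * Real.pi * I * (A / K))) := by
    rw [← exp_add_pi_mul_I]
    push_cast
    ring_nf
  unfold thetaAB
  rw [hq, Theta_add_intCast_right, hexp]

lemma wAB_neg (K : ℕ) (A B : ℤ) (γ μ : ℂ) : wAB K (-A) (-B) (-γ) μ = -wAB K A B γ μ := by
  have hzero := thetaAB_neg K A B 0 μ
  rw [neg_zero] at hzero
  unfold wAB
  rw [thetaAB_neg, hzero, thetaAB_zero_zero_neg, mul_assoc (-exp _), mul_assoc (-exp _),
    mul_div_mul_left _ _ (neg_ne_zero.2 (exp_ne_zero _)), mul_neg, div_neg]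

lemma wAB_periodic_left (K : ℕ) [NeZero K] (B : ℤ) (γ μ : ℂ) :
    Function.Periodic (fun A => wAB K A B γ μ) K := fun A => by
  simp only [wAB, thetaAB_periodic_left K B _ μ A]

lemma wAB_periodic_right (K : ℕ) [NeZero K] (A : ℤ) (γ μ : ℂ) :
    Function.Periodic (fun B => wAB K A B γ μ) K := fun B => by
  simp only [wAB, thetaAB_add_right, mul_assoc]
  exact mul_div_mul_left _ _ (neg_ne_zero.2 (exp_ne_zero _))

lemma deriv_wAB_neg (K : ℕ) (A B : ℤ) (γ μ : ℂ) :
    deriv (fun z => wAB K (-A) (-B) z μ) (-γ) = deriv (fun z => wAB K A B z μ) γ := by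
  have hodd : (fun z => wAB K A B z μ) = fun z => -wAB K (-A) (-B) (-z) μ := by
    simp only [wAB_neg, neg_neg]
  rw [hodd, deriv.fun_neg, deriv_comp_neg (fun z => wAB K (-A) (-B) z μ), neg_neg]

lemma sigmaAB_periodic_left (K : ℕ) (B : ℤ) : Function.Periodic (fun A => sigmaAB K A B) K :=
  fun A => by simp only [sigmaAB, Int.add_emod_right]

lemma sigmaAB_periodic_right (K : ℕ) (A : ℤ) : Function.Periodic (sigmaAB K A) K :=
  fun B => by simp only [sigmaAB, Int.add_emod_right]

lemma epsK_pow_self (K : ℕ) : epsK K ^ K = 1 := by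
  obtain rfl | hK := eq_or_ne K 0
  · exact pow_zero _
  · exact (isPrimitiveRoot_exp K hK).pow_eq_one

lemma epsK_zpow_periodic (K : ℕ) : Function.Periodic (fun n : ℤ => epsK K ^ n) K := fun n => by
  simp only [zpow_add₀ (show epsK K ≠ 0 from exp_ne_zero _), zpow_natCast, epsK_pow_self, mul_one]

lemma sigmaDualAB_periodic_left (K : ℕ) (B : ℤ) :
    Function.Periodic (fun A => sigmaDualAB K A B) K := fun A => by
  have heps : epsK K ^ (-((A + K) * B)) = epsK K ^ (-(A * B)) := by
    rw [show -((A + K) * B) = -(A * B) + -B * K by ring]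
    exact (epsK_zpow_periodic K).int_mul (-B) _
  simp only [sigmaDualAB, heps, neg_add', (sigmaAB_periodic_left K (-B)).sub_eq (-A)]

lemma sigmaDualAB_periodic_right (K : ℕ) (A : ℤ) :
    Function.Periodic (sigmaDualAB K A) K := fun B => by
  have heps : epsK K ^ (-(A * (B + K))) = epsK K ^ (-(A * B)) := by
    rw [show -(A * (B + K)) = -(A * B) + -A * K by ring]
    exact (epsK_zpow_periodic K).int_mul (-A) _
  simp only [sigmaDualAB, heps, neg_add', (sigmaAB_periodic_right K (-A)).sub_eq (-B)]

lemma trace_sigmaAB_neg_mul_trace_sigmaDualAB_neg (K : ℕ) (A B : ℤ)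
    (M P : Matrix (Fin K) (Fin K) ℂ) :
    (sigmaAB K (-A) (-B) * P).trace * (sigmaDualAB K (-A) (-B) * M).trace =
      (sigmaAB K A B * M).trace * (sigmaDualAB K A B * P).trace := by
  simp only [sigmaDualAB, neg_neg, neg_mul_neg, Matrix.smul_mul, Matrix.trace_smul, smul_eq_mul]
  ring

lemma trace_mul_halfTrace (K : ℕ) (f : ℤ → ℤ → ℂ) (M P : Matrix (Fin K) (Fin K) ℂ) :
    (M * halfTrace K f P).trace = puncturedSum K fun A B =>
      f A B * (sigmaAB K A B * M).trace * (sigmaDualAB K A B * P).trace := by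
  simp only [halfTrace, puncturedSum, Finset.mul_sum, Matrix.trace_sum]
  refine Finset.sum_congr rfl fun A _ => Finset.sum_congr rfl fun B _ => ?_
  split_ifs
  · rw [mul_zero, Matrix.trace_zero]
  · rw [Matrix.mul_smul, Matrix.trace_smul, Matrix.trace_mul_comm M, smul_eq_mul]
    ring

lemma trace_mul_halfTrace_comm {K : ℕ} {f g : ℤ → ℤ → ℂ}
    (hleft : ∀ B, Function.Periodic (fun A => g A B) K) (hright : ∀ A, Function.Periodic (g A) K)
    (hneg : ∀ A B, g (-A) (-B) = f A B) (M P : Matrix (Fin K) (Fin K) ℂ) :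
    (P * halfTrace K g M).trace = (M * halfTrace K f P).trace := by
  rw [trace_mul_halfTrace, trace_mul_halfTrace, ← puncturedSum_comp_neg]
  · simp only [hneg, mul_assoc, trace_sigmaAB_neg_mul_trace_sigmaDualAB_neg]
  · intro B A
    simp only [hleft B A, sigmaAB_periodic_left K B A, sigmaDualAB_periodic_left K B A]
  · intro A B
    simp only [hright A B, sigmaAB_periodic_right K A B, sigmaDualAB_periodic_right K A B]

lemma hasDerivAt_trace_mul {𝕜 R m n : Type*} [NontriviallyNormedField 𝕜] [NormedRing R]
    [NormedAlgebra 𝕜 R] [Fintype m] [Fintype n] {F : 𝕜 → Matrix m n R} {G : 𝕜 → Matrix n m R}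
    {F' : Matrix m n R} {G' : Matrix n m R} {t : 𝕜}
    (hF : ∀ i j, HasDerivAt (fun s => F s i j) (F' i j) t)
    (hG : ∀ i j, HasDerivAt (fun s => G s i j) (G' i j) t) :
    HasDerivAt (fun s => (F s * G s).trace) ((F' * G t).trace + (F t * G').trace) t := by
  simp only [Matrix.trace, Matrix.diag_apply, Matrix.mul_apply, ← Finset.sum_add_distrib]
  exact HasDerivAt.fun_sum fun i _ => HasDerivAt.fun_sum fun j _ => (hF i j).mul (hG j i)

lemma hasDerivAt_trace_sq {𝕜 R n : Type*} [NontriviallyNormedField 𝕜] [NormedCommRing R]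
    [NormedAlgebra 𝕜 R] [Fintype n] [DecidableEq n] {F : 𝕜 → Matrix n n R} {F' : Matrix n n R}
    {t : 𝕜} (hF : ∀ i j, HasDerivAt (fun s => F s i j) (F' i j) t) :
    HasDerivAt (fun s => (F s ^ 2).trace) (2 * (F t * F').trace) t := by
  simp only [pow_two]
  refine (hasDerivAt_trace_mul hF hF).congr_deriv ?_
  rw [Matrix.trace_mul_comm F', two_mul]

lemma trace_mul_commutator {R n : Type*} [CommRing R] [Fintype n] (X V : Matrix n n R) :
    (X * (X * V - V * X)).trace = 0 := by
  rw [mul_sub, Matrix.trace_sub, ← Matrix.mul_assoc X V, Matrix.trace_mul_comm (X * V), sub_self]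

lemma hasDerivAt_trace_sq_div {𝕜 n : Type*} [NontriviallyNormedField 𝕜] [NeZero (2 : 𝕜)]
    [Fintype n] [DecidableEq n] {F : 𝕜 → Matrix n n 𝕜} {α : 𝕜 → 𝕜} {W V : Matrix n n 𝕜} {s t : 𝕜}
    (hα₀ : α t ≠ 0) (hα : HasDerivAt α (-2 * α t * s) t)
    (hF : ∀ i j, HasDerivAt (fun u => F u i j)
      ((-s • F t - α t • W - (F t * V - V * F t)) i j) t) :
    HasDerivAt (fun u => (F u ^ 2).trace / (2 * α u)) (-(F t * W).trace) t := by
  have htrace : (F t * (-s • F t - α t • W - (F t * V - V * F t))).trace =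
      -s * (F t ^ 2).trace - α t * (F t * W).trace := by
    rw [mul_sub, Matrix.trace_sub, trace_mul_commutator, sub_zero, mul_sub, Matrix.trace_sub,
      Matrix.mul_smul, Matrix.mul_smul, Matrix.trace_smul, Matrix.trace_smul, pow_two,
      smul_eq_mul, smul_eq_mul]
  have hsq := hasDerivAt_trace_sq hF
  rw [htrace] at hsq
  refine (hsq.fun_div (hα.const_mul 2) (mul_ne_zero two_ne_zero hα₀)).congr_deriv ?_
  field

/-- In the elliptic system `r m n`, `f m n A B` and `V m n` are `ρ'(γ_m - γ_n)`,
`w'_{AB}(γ_m - γ_n)` and `tr₂(r(γ_m - γ_n) J_n⁽²⁾)`. -/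
theorem tau_function_compatibility_general {ι : Type*} [DecidableEq ι] {K : ℕ} {x : ι → ℂ}
    {α : ι → (ι → ℂ) → ℂ} {J : ι → (ι → ℂ) → Matrix (Fin K) (Fin K) ℂ} {r : ι → ι → ℂ}
    {f : ι → ι → ℤ → ℤ → ℂ} {V : ι → ι → Matrix (Fin K) (Fin K) ℂ}
    (hleft : ∀ m n B, Function.Periodic (fun A => f m n A B) K)
    (hright : ∀ m n A, Function.Periodic (f m n A) K)
    (hneg : ∀ m n A B, f n m (-A) (-B) = f m n A B)
    (hα₀ : ∀ m, α m x ≠ 0)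
    (hα : ∀ m n, m ≠ n → HasDerivAt (fun t => α m (Function.update x n t))
      (-2 * α m x * α n x * r m n) (x n))
    (hJ : ∀ m n, m ≠ n → ∀ i j, HasDerivAt (fun t => J m (Function.update x n t) i j)
      ((-(α n x * r m n) • J m x - α m x • halfTrace K (f m n) (J n x)
        - (J m x * V m n - V m n * J m x)) i j) (x n))
    {m n : ι} (hmn : m ≠ n) :
    HasDerivAt (fun t => (J m (Function.update x n t) ^ 2).trace
        / (2 * α m (Function.update x n t)))
      (-puncturedSum K fun A B =>
        f m n A B * (sigmaAB K A B * J m x).trace * (sigmaDualAB K A B * J n x).trace) (x n) ∧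
    HasDerivAt (fun t => (J n (Function.update x m t) ^ 2).trace
        / (2 * α n (Function.update x m t)))
      (-puncturedSum K fun A B =>
        f m n A B * (sigmaAB K A B * J m x).trace * (sigmaDualAB K A B * J n x).trace) (x m) := by
  have hderiv : ∀ m n, m ≠ n → HasDerivAt (fun t => (J m (Function.update x n t) ^ 2).trace
      / (2 * α m (Function.update x n t)))
      (-(J m x * halfTrace K (f m n) (J n x)).trace) (x n) := by
    intro m n hmn
    have h := hasDerivAt_trace_sq_div (F := fun t => J m (Function.update x n t))
      (α := fun t => α m (Function.update x n t)) (s := α n x * r m n) (t := x n)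
      (W := halfTrace K (f m n) (J n x)) (V := V m n)
    simp only [Function.update_eq_self, ← mul_assoc] at h
    exact h (hα₀ m) (hα m n hmn) (hJ m n hmn)
  rw [← trace_mul_halfTrace]
  refine ⟨hderiv m n hmn, ?_⟩
  rw [← trace_mul_halfTrace_comm (hleft n m) (hright n m) (hneg m n)]
  exact hderiv n m hmn.symm

/-- compatibility of the tau-function of the elliptic system:
given differentiable data on an open set `U ⊆ ℂ^{2N}` satisfying the equations
(ii) for `α_m` and (iii) for `J_m` (the nonautonomous elliptic integrable system),
the partial derivatives `∂/∂λ_n (tr(J_m²)/(2α_m))` are symmetric in `m, n` and equal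
to `−∑_{(A,B)≠(0,0)} w'_{AB}(γ_m−γ_n)·tr(σ_{AB}J_m)·tr(σ^{AB}J_n)`; hence the
equations `∂(log τ)/∂λ_m = tr(J_m²)/(2α_m)` defining the tau-function are compatible. -/
theorem tau_function_compatibility (K N : ℕ) (hK : 2 ≤ K) (hN : 1 ≤ N)
    (U : Set (Fin (2 * N) → ℂ)) (hU : IsOpen U)
    (μf : (Fin (2 * N) → ℂ) → ℂ)
    (γf αf : Fin (2 * N) → (Fin (2 * N) → ℂ) → ℂ)
    (J : Fin (2 * N) → (Fin (2 * N) → ℂ) → Matrix (Fin K) (Fin K) ℂ)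
    (hμpos : ∀ x ∈ U, 0 < (μf x).im)
    (hαne : ∀ m, ∀ x ∈ U, αf m x ≠ 0)
    (hdiffμ : ∀ x ∈ U, DifferentiableAt ℂ μf x)
    (hdiffγ : ∀ m, ∀ x ∈ U, DifferentiableAt ℂ (γf m) x)
    (hdiffα : ∀ m, ∀ x ∈ U, DifferentiableAt ℂ (αf m) x)
    (hdiffJ : ∀ m (i j : Fin K), ∀ x ∈ U, DifferentiableAt ℂ (fun y => J m y i j) x)
    (hth00 : ∀ m n, m ≠ n → ∀ x ∈ U, thetaAB K 0 0 (γf m x - γf n x) (μf x) ≠ 0)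
    (hth0 : ∀ x ∈ U, ∀ A B : ℕ, A < K → B < K → ¬(A = 0 ∧ B = 0) →
      thetaAB K A B 0 (μf x) ≠ 0)
    (hαeq : ∀ m n, m ≠ n → ∀ x ∈ U,
      HasDerivAt (fun t => αf m (Function.update x n t))
        (-2 * αf m x * αf n x * deriv (fun z => rho z (μf x)) (γf m x - γf n x))
        (x n))
    (hJeq : ∀ m n, m ≠ n → ∀ x ∈ U, ∀ i j : Fin K,
      HasDerivAt (fun t => J m (Function.update x n t) i j)
        (((-(αf n x * deriv (fun z => rho z (μf x)) (γf m x - γf n x))) • J m x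
          - αf m x •
              halfTrace K (fun A B => deriv (fun z => wAB K A B z (μf x)) (γf m x - γf n x))
                (J n x)
          - (J m x * halfTrace K (fun A B => wAB K A B (γf m x - γf n x) (μf x)) (J n x)
              - halfTrace K (fun A B => wAB K A B (γf m x - γf n x) (μf x)) (J n x)
                * J m x)) i j)
        (x n)) :
    ∀ m n, m ≠ n → ∀ x ∈ U,
      deriv (fun t => Matrix.trace ((J m (Function.update x n t)) ^ 2)
          / (2 * αf m (Function.update x n t))) (x n)
        = deriv (fun t => Matrix.trace ((J n (Function.update x m t)) ^ 2)
            / (2 * αf n (Function.update x m t))) (x m) ∧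
      deriv (fun t => Matrix.trace ((J m (Function.update x n t)) ^ 2)
          / (2 * αf m (Function.update x n t))) (x n)
        = -∑ A ∈ Finset.range K, ∑ B ∈ Finset.range K,
            if A = 0 ∧ B = 0 then 0
            else deriv (fun z => wAB K A B z (μf x)) (γf m x - γf n x)
              * Matrix.trace (sigmaAB K A B * J m x)
              * Matrix.trace (sigmaDualAB K A B * J n x) := by
  have : NeZero K := ⟨by lia⟩
  intro m n hmn x hx
  obtain ⟨hm, hn⟩ := tau_function_compatibility_general
    (f := fun m n A B => deriv (fun z => wAB K A B z (μf x)) (γf m x - γf n x))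
    (fun _ _ B A => by simp only [wAB_periodic_left K B _ _ A])
    (fun _ _ A B => by simp only [wAB_periodic_right K A _ _ B])
    (fun m n A B => by rw [← neg_sub, deriv_wAB_neg])
    (hαne · x hx) (hαeq · · · x hx) (hJeq · · · x hx) hmn
  exact ⟨hm.deriv.trans hn.deriv.symm, hm.deriv⟩
end
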